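/- For arbitrary matrices A_k (not necessarily of full column or row rank), for every r ≥ 0 the cyclic exact BCD iterates satisfy Δ^{(r+1)} ≤ 3 · max{ Δ^{(0)}, 2 R_0² · L_max · (1 + K²) } / (r+1), where Δ^{(r)} := f(x^{(r)}) − f*. -/

import Mathlib

open Finset

/-- Squared Euclidean norm of a vector in `ℝ^n`. -/
noncomputable def sqnorm {n : ℕ} (v : Fin n → ℝ) : ℝ := ∑ i, v i ^ 2

/-- Euclidean inner product on `ℝ^n`. -/
noncomputable def dotp {n : ℕ} (u v : Fin n → ℝ) : ℝ := ∑ i, u i * v i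

/-- `λ_max(AᵀA)` for a real matrix `A`, characterized as the maximum of `‖Av‖²`
over unit vectors `v`. -/
noncomputable def lamMaxQ {M N : ℕ} (A : Matrix (Fin M) (Fin N) ℝ) : ℝ :=
  sSup {r : ℝ | ∃ v : Fin N → ℝ, sqnorm v = 1 ∧ r = sqnorm (A.mulVec v)}

/-- `λ_min(AᵀA)` for a real matrix `A`, characterized as the minimum of `‖Av‖²`
over unit vectors `v`. -/
noncomputable def lamMinQ {M N : ℕ} (A : Matrix (Fin M) (Fin N) ℝ) : ℝ :=
  sInf {r : ℝ | ∃ v : Fin N → ℝ, sqnorm v = 1 ∧ r = sqnorm (A.mulVec v)}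

/-- `λ_max(AᵀA)` for the concatenated matrix `A = [A_1 ⋯ A_K]`, acting on block
vectors. -/
noncomputable def lamMaxBlock {K M N : ℕ} (A : Fin K → Matrix (Fin M) (Fin N) ℝ) : ℝ :=
  sSup {r : ℝ | ∃ v : Fin K → Fin N → ℝ, (∑ k, sqnorm (v k)) = 1 ∧
    r = sqnorm (∑ k, (A k).mulVec (v k))}

/-- Maximum of a finite family of reals indexed by `Fin K`, `K ≥ 1`. -/
noncomputable def maxOf {K : ℕ} (hK : 1 ≤ K) (P : Fin K → ℝ) : ℝ :=
  Finset.univ.sup' (Finset.univ_nonempty_iff.mpr ⟨⟨0, hK⟩⟩) P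

/-- Minimum of a finite family of reals indexed by `Fin K`, `K ≥ 1`. -/
noncomputable def minOf {K : ℕ} (hK : 1 ≤ K) (P : Fin K → ℝ) : ℝ :=
  Finset.univ.inf' (Finset.univ_nonempty_iff.mpr ⟨⟨0, hK⟩⟩) P

/-- The residual `Σ_k A_k x_k − b`. -/
noncomputable def resid {K M N : ℕ} (A : Fin K → Matrix (Fin M) (Fin N) ℝ)
    (b : Fin M → ℝ) (x : Fin K → Fin N → ℝ) : Fin M → ℝ :=
  (∑ k, (A k).mulVec (x k)) - b

/-- The smooth part `g(x) = (1/2)‖Σ_k A_k x_k − b‖²`. -/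
noncomputable def gq {K M N : ℕ} (A : Fin K → Matrix (Fin M) (Fin N) ℝ)
    (b : Fin M → ℝ) (x : Fin K → Fin N → ℝ) : ℝ :=
  (1 / 2) * sqnorm (resid A b x)

/-- The objective `f(x) = g(x) + Σ_k h_k(x_k)`. -/
noncomputable def fq {K M N : ℕ} (A : Fin K → Matrix (Fin M) (Fin N) ℝ)
    (b : Fin M → ℝ) (h : Fin K → (Fin N → ℝ) → ℝ) (x : Fin K → Fin N → ℝ) : ℝ :=
  gq A b x + ∑ k, h k (x k)

/-- The partial gradient `∇_k g(x) = A_kᵀ (Σ_j A_j x_j − b)`. -/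
noncomputable def gradk {K M N : ℕ} (A : Fin K → Matrix (Fin M) (Fin N) ℝ)
    (b : Fin M → ℝ) (x : Fin K → Fin N → ℝ) (k : Fin K) : Fin N → ℝ :=
  ((A k).transpose).mulVec (resid A b x)

/-- The intermediate point `w_k^{(r+1)}` of the cycle: blocks `j < k` come from
`x^{(r+1)} = xp`, the remaining blocks from `x^{(r)} = x`. -/
def wpt {K N : ℕ} (x xp : Fin K → Fin N → ℝ) (k : Fin K) : Fin K → Fin N → ℝ :=
  fun j => if j < k then xp j else x j

/-- The objective of the `k`-th BCPG prox subproblem at the point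
`w_k^{(r+1)} = wpt x xp k`, evaluated at candidate block `y`. -/
noncomputable def bcpgObj {K M N : ℕ} (A : Fin K → Matrix (Fin M) (Fin N) ℝ)
    (b : Fin M → ℝ) (h : Fin K → (Fin N → ℝ) → ℝ) (P : Fin K → ℝ)
    (x xp : Fin K → Fin N → ℝ) (k : Fin K) (y : Fin N → ℝ) : ℝ :=
  dotp (gradk A b (wpt x xp k) k) (y - x k) + (P k / 2) * sqnorm (y - x k) + h k y

/-- One cycle of cyclic BCPG: `xp = x^{(r+1)}` is obtained from `x = x^{(r)}`
by letting, for `k = 1,…,K`, the `k`-th block minimize the prox subproblem at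
`w_k^{(r+1)}` over `X_k`. -/
def BCPGStep {K M N : ℕ} (A : Fin K → Matrix (Fin M) (Fin N) ℝ)
    (b : Fin M → ℝ) (h : Fin K → (Fin N → ℝ) → ℝ)
    (X : Fin K → Set (Fin N → ℝ)) (P : Fin K → ℝ)
    (x xp : Fin K → Fin N → ℝ) : Prop :=
  ∀ k : Fin K, xp k ∈ X k ∧ ∀ y ∈ X k,
    bcpgObj A b h P x xp k (xp k) ≤ bcpgObj A b h P x xp k y

/-- One cycle of cyclic exact BCD: `xp = x^{(r+1)}` is obtained from
`x = x^{(r)}` by letting, for `k = 1,…,K`, the `k`-th block minimize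
`f(x_1^{(r+1)},…,x_{k−1}^{(r+1)}, ·, x_{k+1}^{(r)},…,x_K^{(r)})` over `X_k`. -/
def BCDStep {K M N : ℕ} (A : Fin K → Matrix (Fin M) (Fin N) ℝ)
    (b : Fin M → ℝ) (h : Fin K → (Fin N → ℝ) → ℝ)
    (X : Fin K → Set (Fin N → ℝ))
    (x xp : Fin K → Fin N → ℝ) : Prop :=
  ∀ k : Fin K, xp k ∈ X k ∧ ∀ y ∈ X k,
    fq A b h (Function.update (wpt x xp k) k (xp k)) ≤
      fq A b h (Function.update (wpt x xp k) k y)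

/-!
Optimality of each block in a sweep `x ↦ y` gives a first-order variational inequality. It is used
twice. Tested against the old block `x_k` and summed over the sweep, it yields the sufficient
decrease `½ ∑ ‖A_k (y_k - x_k)‖² ≤ f(x) - f(y)`: the quadratic part of `g` along block `k` is
`½ ‖A_k ·‖²`, so no strong convexity in `x_k` itself is required. Tested against an optimal block
`x*_k`, it bounds the gap `f(y) - f*` by `∑ ⟪e_k, A_k (y_k - x*_k)⟫`, where `e_k` is the change of
the residual after the `k`-th update, and `‖e_k‖² ≤ K ∑ ‖A_j (y_j - x_j)‖²`. By Cauchy–Schwarz the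
gaps `Δ` satisfy `Δ_{n+1}² ≤ C (Δ_n - Δ_{n+1})`, which forces `Δ_n = O(C / n)`.
-/

section Sweep

variable {K : ℕ} {E : Fin K → Type*}

/-- The point reached after the first `i` updates of a cyclic sweep from `x` to `y`: the blocks
of index below `i` are those of `y`, the others those of `x`. The counter `i` is a natural number,
so that both endpoints `i = 0` and `i = K` of the sweep are included. -/
def sweepPoint (x y : ∀ k, E k) (i : ℕ) : ∀ k, E k :=
  fun j => if (j : ℕ) < i then y j else x j

/-- One cycle of exact block coordinate descent for `f` over `X_1 × ⋯ × X_K`: the `k`-th block of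
`y` minimizes `f` over `X k` in the `k`-th block, the blocks before `k` being those of `y` and the
blocks after `k` those of `x`. -/
def IsBCDSweep (f : (∀ k, E k) → ℝ) (X : ∀ k, Set (E k)) (x y : ∀ k, E k) : Prop :=
  ∀ k : Fin K, y k ∈ X k ∧
    IsMinOn (fun z => f (Function.update (sweepPoint x y k) k z)) (X k) (y k)

lemma sweepPoint_zero (x y : ∀ k, E k) : sweepPoint x y 0 = x := by
  funext j
  simp [sweepPoint]

lemma sweepPoint_last (x y : ∀ k, E k) : sweepPoint x y K = y := by
  funext j
  simp [sweepPoint]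

lemma sweepPoint_apply_self (x y : ∀ k, E k) (k : Fin K) : sweepPoint x y k k = x k :=
  if_neg (lt_irrefl _)

lemma sweepPoint_succ_apply_self (x y : ∀ k, E k) (k : Fin K) :
    sweepPoint x y (k + 1) k = y k :=
  if_pos (Nat.lt_succ_self _)

lemma sweepPoint_succ (x y : ∀ k, E k) (k : Fin K) :
    sweepPoint x y (k + 1) = Function.update (sweepPoint x y k) k (y k) := by
  funext j
  obtain rfl | hjk := eq_or_ne j k
  · rw [sweepPoint_succ_apply_self, Function.update_self]
  · have hlt : (j : ℕ) < k + 1 ↔ (j : ℕ) < k := by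
      have := Fin.val_ne_of_ne hjk
      omega
    rw [Function.update_of_ne hjk]
    simp only [sweepPoint, hlt]

lemma update_sweepPoint_succ (x y : ∀ k, E k) (k : Fin K) (z : E k) :
    Function.update (sweepPoint x y (k + 1)) k z = Function.update (sweepPoint x y k) k z := by
  rw [sweepPoint_succ, Function.update_idem]

lemma update_sweepPoint_succ_eq_sweepPoint (x y : ∀ k, E k) (k : Fin K) :
    Function.update (sweepPoint x y (k + 1)) k (x k) = sweepPoint x y k := by
  rw [update_sweepPoint_succ, ← sweepPoint_apply_self x y k, Function.update_eq_self]

lemma IsBCDSweep.le_update {f : (∀ k, E k) → ℝ} {X : ∀ k, Set (E k)} {x y : ∀ k, E k}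
    (hxy : IsBCDSweep f X x y) {k : Fin K} {z : E k} (hz : z ∈ X k) :
    f (sweepPoint x y (k + 1)) ≤ f (Function.update (sweepPoint x y (k + 1)) k z) := by
  rw [update_sweepPoint_succ, sweepPoint_succ]
  exact isMinOn_iff.mp (hxy k).2 z hz

lemma sum_sweepPoint_sub_succ (f : (∀ k, E k) → ℝ) (x y : ∀ k, E k) :
    ∑ k : Fin K, (f (sweepPoint x y k) - f (sweepPoint x y (k + 1))) = f x - f y := by
  rw [Fin.sum_univ_eq_sum_range (fun i => f (sweepPoint x y i) - f (sweepPoint x y (i + 1))),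
    Finset.sum_range_sub', sweepPoint_zero, sweepPoint_last]

end Sweep

section Inequalities

open scoped RealInnerProductSpace

lemma nonneg_of_forall_add_mul_nonneg {a q : ℝ}
    (h : ∀ t : ℝ, 0 < t → t ≤ 1 → 0 ≤ a + t * q) : 0 ≤ a := by
  have hlim : Filter.Tendsto (fun t : ℝ => a + t * q) (nhdsWithin 0 (Set.Ioi 0)) (nhds a) := by
    have hcont : Continuous fun t : ℝ => a + t * q := by fun_prop
    simpa using (hcont.tendsto 0).mono_left nhdsWithin_le_nhds
  refine ge_of_tendsto hlim ?_
  filter_upwards [Ioc_mem_nhdsGT zero_lt_one] with t ht using h t ht.1 ht.2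

/-- Compare with the points of the segment from `x` to `z`: along it the quadratic term is of
second order. -/
lemma inner_add_sub_nonneg_of_quadratic_nonneg {E F : Type*} [AddCommGroup E]
    [Module ℝ E] [SeminormedAddCommGroup F] [InnerProductSpace ℝ F] {s : Set E} {φ : E → ℝ}
    (hφ : ConvexOn ℝ s φ) (B : E →ₗ[ℝ] F) (u : F) {x : E} (hx : x ∈ s)
    (hmin : ∀ z ∈ s, 0 ≤ ⟪u, B (z - x)⟫ + 1 / 2 * ‖B (z - x)‖ ^ 2 + (φ z - φ x))
    {z : E} (hz : z ∈ s) : 0 ≤ ⟪u, B (z - x)⟫ + (φ z - φ x) := by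
  refine nonneg_of_forall_add_mul_nonneg (q := 1 / 2 * ‖B (z - x)‖ ^ 2) fun t ht0 ht1 => ?_
  have hmem : (1 - t) • x + t • z ∈ s := hφ.1 hx hz (sub_nonneg.2 ht1) ht0.le (by ring)
  have hconv : φ ((1 - t) • x + t • z) ≤ (1 - t) * φ x + t * φ z :=
    hφ.2 hx hz (sub_nonneg.2 ht1) ht0.le (by ring)
  have hdir : (1 - t) • x + t • z - x = t • (z - x) := by module
  have hquad := hmin _ hmem
  rw [hdir, map_smul, inner_smul_right, norm_smul, Real.norm_of_nonneg ht0.le] at hquad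
  refine nonneg_of_mul_nonneg_right (a := t) ?_ ht0
  linarith

lemma norm_sum_sq_le_card_mul_sum_norm_sq {ι F : Type*} [SeminormedAddCommGroup F]
    (s : Finset ι) (v : ι → F) : ‖∑ i ∈ s, v i‖ ^ 2 ≤ #s * ∑ i ∈ s, ‖v i‖ ^ 2 :=
  (pow_le_pow_left₀ (norm_nonneg _) (norm_sum_le s v) 2).trans sq_sum_le_card_mul_sum_sq

lemma le_two_mul_div_of_sq_succ_le {D : ℕ → ℝ} {C : ℝ} (hD : ∀ n, 0 ≤ D n) (h0 : D 0 ≤ C)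
    (hrec : ∀ n, D (n + 1) ^ 2 ≤ C * (D n - D (n + 1))) (n : ℕ) : D n ≤ 2 * C / (n + 1) := by
  have hC : 0 ≤ C := (hD 0).trans h0
  induction n with
  | zero => norm_num; linarith
  | succ n ih =>
    push_cast
    by_contra! hlt
    set b : ℝ := 2 * C / (n + 1 + 1) with hb
    have hsq : b ^ 2 < D (n + 1) ^ 2 := pow_lt_pow_left₀ hlt (by positivity) two_ne_zero
    have hdecr : C * (D n - D (n + 1)) ≤ C * (2 * C / (n + 1) - b) := by gcongr
    have hgap : b ^ 2 - C * (2 * C / (n + 1) - b) =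
        2 * C ^ 2 * n / ((n + 1 + 1) ^ 2 * (n + 1)) := by
      rw [hb]
      field_simp
      ring
    have hgap_nonneg : 0 ≤ 2 * C ^ 2 * n / (((n : ℝ) + 1 + 1) ^ 2 * (n + 1)) := by positivity
    linarith [hrec n]

end Inequalities

section BlockObjective

open scoped RealInnerProductSpace

variable {K : ℕ} {E : Fin K → Type*} [∀ k, AddCommGroup (E k)] [∀ k, Module ℝ (E k)]
  {F : Type*} [SeminormedAddCommGroup F] [InnerProductSpace ℝ F]
  (A : ∀ k, E k →ₗ[ℝ] F) (b : F) (h : ∀ k, E k → ℝ)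

/-- The residual `∑ₖ Aₖ xₖ - b` of a block vector, for linear maps `Aₖ` between abstract spaces. -/
def blockResidual (x : ∀ k, E k) : F := ∑ k, A k (x k) - b

/-- The composite least-squares objective `½ ‖∑ₖ Aₖ xₖ - b‖² + ∑ₖ hₖ(xₖ)`. The blocks live in
vector spaces without a norm; they are measured only through their images under the `Aₖ`. -/
noncomputable def blockObjective (x : ∀ k, E k) : ℝ :=
  1 / 2 * ‖blockResidual A b x‖ ^ 2 + ∑ k, h k (x k)

lemma blockResidual_sub (x y : ∀ k, E k) :
    blockResidual A b y - blockResidual A b x = ∑ k, A k (y k - x k) := by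
  simp only [blockResidual, map_sub, Finset.sum_sub_distrib]
  abel

lemma blockObjective_sub (x y : ∀ k, E k) :
    blockObjective A b h y - blockObjective A b h x =
      ∑ k, (⟪blockResidual A b x, A k (y k - x k)⟫ + (h k (y k) - h k (x k))) +
        1 / 2 * ‖∑ k, A k (y k - x k)‖ ^ 2 := by
  have hres : blockResidual A b y = blockResidual A b x + ∑ k, A k (y k - x k) := by
    rw [← blockResidual_sub A b x y, add_sub_cancel]
  rw [blockObjective, blockObjective, hres, norm_add_sq_real, inner_sum, Finset.sum_add_distrib,
    Finset.sum_sub_distrib]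
  ring

lemma blockObjective_update_sub (x : ∀ k, E k) (k : Fin K) (z : E k) :
    blockObjective A b h (Function.update x k z) - blockObjective A b h x =
      ⟪blockResidual A b x, A k (z - x k)⟫ + 1 / 2 * ‖A k (z - x k)‖ ^ 2 +
        (h k z - h k (x k)) := by
  rw [blockObjective_sub, Fintype.sum_eq_single k fun j hj => by simp [Function.update_of_ne hj],
    Fintype.sum_eq_single k fun j hj => by simp [Function.update_of_ne hj], Function.update_self]
  ring

lemma norm_sq_blockResidual_sub_sweepPoint_le (x y : ∀ k, E k) (i : ℕ) :
    ‖blockResidual A b y - blockResidual A b (sweepPoint x y i)‖ ^ 2 ≤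
      K * ∑ k, ‖A k (y k - x k)‖ ^ 2 := by
  rw [blockResidual_sub]
  calc _ ≤ K * ∑ k, ‖A k (y k - sweepPoint x y i k)‖ ^ 2 := by
        simpa using norm_sum_sq_le_card_mul_sum_norm_sq univ
          fun k => A k (y k - sweepPoint x y i k)
    _ ≤ K * ∑ k, ‖A k (y k - x k)‖ ^ 2 := by
        gcongr with k
        unfold sweepPoint
        split_ifs
        · simp
        · rfl

namespace IsBCDSweep

variable {A b h} {X : ∀ k, Set (E k)} {x y z : ∀ k, E k}

lemma variational_inequality (hh : ∀ k, ConvexOn ℝ (X k) (h k))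
    (hxy : IsBCDSweep (blockObjective A b h) X x y) {k : Fin K} {w : E k} (hw : w ∈ X k) :
    0 ≤ ⟪blockResidual A b (sweepPoint x y (k + 1)), A k (w - y k)⟫ + (h k w - h k (y k)) := by
  refine inner_add_sub_nonneg_of_quadratic_nonneg (hh k) (A k) _ (hxy k).1 (fun v hv => ?_) hw
  have hle := sub_nonneg.2 (hxy.le_update hv)
  rwa [blockObjective_update_sub, sweepPoint_succ_apply_self] at hle

lemma half_sum_norm_sq_le_sub (hh : ∀ k, ConvexOn ℝ (X k) (h k))
    (hxy : IsBCDSweep (blockObjective A b h) X x y) (hx : ∀ k, x k ∈ X k) :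
    1 / 2 * ∑ k, ‖A k (y k - x k)‖ ^ 2 ≤ blockObjective A b h x - blockObjective A b h y := by
  rw [← sum_sweepPoint_sub_succ (blockObjective A b h) x y, Finset.mul_sum]
  refine Finset.sum_le_sum fun k _ => ?_
  have hvi := hxy.variational_inequality hh (hx k)
  rw [← update_sweepPoint_succ_eq_sweepPoint x y k, blockObjective_update_sub,
    sweepPoint_succ_apply_self, ← neg_sub (x k), map_neg, norm_neg]
  linarith

lemma blockObjective_le (hh : ∀ k, ConvexOn ℝ (X k) (h k))
    (hxy : IsBCDSweep (blockObjective A b h) X x y) (hx : ∀ k, x k ∈ X k) :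
    blockObjective A b h y ≤ blockObjective A b h x :=
  sub_nonneg.1 <| le_trans (by positivity) (hxy.half_sum_norm_sq_le_sub hh hx)

lemma sub_le_sum_inner (hh : ∀ k, ConvexOn ℝ (X k) (h k))
    (hxy : IsBCDSweep (blockObjective A b h) X x y) (hz : ∀ k, z k ∈ X k) :
    blockObjective A b h y - blockObjective A b h z ≤
      ∑ k : Fin K, ⟪blockResidual A b y - blockResidual A b (sweepPoint x y (k + 1)),
        A k (y k - z k)⟫ := by
  calc blockObjective A b h y - blockObjective A b h z
      ≤ -∑ k, (⟪blockResidual A b y, A k (z k - y k)⟫ + (h k (z k) - h k (y k))) := by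
        have hquad : 0 ≤ 1 / 2 * ‖∑ k, A k (z k - y k)‖ ^ 2 := by positivity
        linarith [blockObjective_sub A b h y z]
    _ = ∑ k, (⟪blockResidual A b y, A k (y k - z k)⟫ - (h k (z k) - h k (y k))) := by
        rw [← Finset.sum_neg_distrib]
        refine Finset.sum_congr rfl fun k _ => ?_
        rw [← neg_sub (y k), map_neg, inner_neg_right]
        ring
    _ ≤ _ := by
        refine Finset.sum_le_sum fun k _ => ?_
        have hvi := hxy.variational_inequality hh (hz k)
        rw [← neg_sub (y k), map_neg, inner_neg_right] at hvi
        rw [inner_sub_left]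
        linarith

lemma sub_sq_le (hh : ∀ k, ConvexOn ℝ (X k) (h k))
    (hxy : IsBCDSweep (blockObjective A b h) X x y) (hx : ∀ k, x k ∈ X k)
    (hz : ∀ k, z k ∈ X k) (hzy : blockObjective A b h z ≤ blockObjective A b h y) {Q : ℝ}
    (hQ : ∑ k, ‖A k (y k - z k)‖ ^ 2 ≤ Q) :
    (blockObjective A b h y - blockObjective A b h z) ^ 2 ≤
      2 * Q * K ^ 2 * (blockObjective A b h x - blockObjective A b h y) := by
  set e : Fin K → F := fun k =>
    blockResidual A b y - blockResidual A b (sweepPoint x y (k + 1))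
  set S := ∑ k, ‖A k (y k - x k)‖ ^ 2
  have he_sum : ∑ k, ‖e k‖ ^ 2 ≤ K ^ 2 * S :=
    calc ∑ k, ‖e k‖ ^ 2 ≤ ∑ _k : Fin K, K * S := Finset.sum_le_sum fun k _ =>
          norm_sq_blockResidual_sub_sweepPoint_le A b x y (k + 1)
      _ = K ^ 2 * S := by
          rw [Finset.sum_const, Finset.card_univ, Fintype.card_fin, nsmul_eq_mul]
          ring
  have hgap : blockObjective A b h y - blockObjective A b h z ≤
      ∑ k, ‖e k‖ * ‖A k (y k - z k)‖ :=
    (hxy.sub_le_sum_inner hh hz).trans <|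
      Finset.sum_le_sum fun k _ => real_inner_le_norm (e k) (A k (y k - z k))
  have hQ_nonneg : 0 ≤ Q := le_trans (by positivity) hQ
  calc (blockObjective A b h y - blockObjective A b h z) ^ 2
      ≤ (∑ k, ‖e k‖ * ‖A k (y k - z k)‖) ^ 2 := pow_le_pow_left₀ (sub_nonneg.2 hzy) hgap 2
    _ ≤ (∑ k, ‖e k‖ ^ 2) * ∑ k, ‖A k (y k - z k)‖ ^ 2 := Finset.sum_mul_sq_le_sq_mul_sq _ _ _
    _ ≤ K ^ 2 * S * Q := by gcongr
    _ = 2 * Q * K ^ 2 * (1 / 2 * S) := by ring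
    _ ≤ _ := by
        gcongr
        exact hxy.half_sum_norm_sq_le_sub hh hx

end IsBCDSweep

theorem bcd_rate_general_general {X : ∀ k, Set (E k)}
    (hh : ∀ k, ConvexOn ℝ (X k) (h k)) {x : ℕ → ∀ k, E k} (hx0 : ∀ k, x 0 k ∈ X k)
    (hx : ∀ n, IsBCDSweep (blockObjective A b h) X (x n) (x (n + 1)))
    {xstar : ∀ k, E k} (hxstar : ∀ k, xstar k ∈ X k)
    (hmin : ∀ z, (∀ k, z k ∈ X k) → blockObjective A b h xstar ≤ blockObjective A b h z)
    {Q : ℝ} (hQ : ∀ z, (∀ k, z k ∈ X k) → blockObjective A b h z ≤ blockObjective A b h (x 0) →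
      ∑ k, ‖A k (z k - xstar k)‖ ^ 2 ≤ Q) (n : ℕ) :
    blockObjective A b h (x n) - blockObjective A b h xstar ≤
      2 * max (blockObjective A b h (x 0) - blockObjective A b h xstar) (2 * Q * K ^ 2) /
        (n + 1) := by
  have hmem : ∀ n k, x n k ∈ X k
    | 0 => hx0
    | n + 1 => fun k => (hx n k).1
  have hdecr : ∀ n, blockObjective A b h (x (n + 1)) ≤ blockObjective A b h (x n) :=
    fun n => (hx n).blockObjective_le hh (hmem n)
  have hsublevel : ∀ n, blockObjective A b h (x n) ≤ blockObjective A b h (x 0) :=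
    fun n => antitone_nat_of_succ_le (f := fun n => blockObjective A b h (x n)) hdecr n.zero_le
  refine le_two_mul_div_of_sq_succ_le
    (D := fun n => blockObjective A b h (x n) - blockObjective A b h xstar)
    (fun n => sub_nonneg.2 (hmin _ (hmem n))) (le_max_left _ _) (fun n => ?_) n
  rw [sub_sub_sub_cancel_right]
  calc _ ≤ 2 * Q * K ^ 2 * (blockObjective A b h (x n) - blockObjective A b h (x (n + 1))) :=
        (hx n).sub_sq_le hh (hmem n) hxstar (hmin _ (hmem _)) (hQ _ (hmem _) (hsublevel _))
    _ ≤ _ := mul_le_mul_of_nonneg_right (le_max_right _ _) (sub_nonneg.2 (hdecr n))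

end BlockObjective

section Euclidean

variable {K M N : ℕ}

/-- The linear map `v ↦ A v` of a matrix, with values in Euclidean space. Its domain is the plain
function space, on which the blocks of the iterates are given. -/
noncomputable def mulVecEuclideanLin (A : Matrix (Fin M) (Fin N) ℝ) :
    (Fin N → ℝ) →ₗ[ℝ] EuclideanSpace ℝ (Fin M) :=
  (WithLp.linearEquiv 2 ℝ (Fin M → ℝ)).symm.toLinearMap ∘ₗ A.mulVecLin

lemma mulVecEuclideanLin_apply (A : Matrix (Fin M) (Fin N) ℝ) (v : Fin N → ℝ) :
    mulVecEuclideanLin A v = WithLp.toLp 2 (A.mulVec v) := rfl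

lemma sqnorm_eq_norm_sq (v : Fin N → ℝ) : sqnorm v = ‖WithLp.toLp 2 v‖ ^ 2 :=
  (EuclideanSpace.real_norm_sq_eq _).symm

lemma sqnorm_nonneg (v : Fin N → ℝ) : 0 ≤ sqnorm v :=
  Finset.sum_nonneg fun _ _ => sq_nonneg _

lemma sqnorm_smul (t : ℝ) (v : Fin N → ℝ) : sqnorm (t • v) = t ^ 2 * sqnorm v := by
  simp only [sqnorm, Pi.smul_apply, smul_eq_mul, mul_pow, Finset.mul_sum]

lemma fq_eq_blockObjective (A : Fin K → Matrix (Fin M) (Fin N) ℝ) (b : Fin M → ℝ)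
    (h : Fin K → (Fin N → ℝ) → ℝ) :
    fq A b h = blockObjective (fun k => mulVecEuclideanLin (A k)) (WithLp.toLp 2 b) h := by
  funext x
  simp only [fq, gq, resid, sqnorm_eq_norm_sq, blockObjective, blockResidual,
    mulVecEuclideanLin_apply, WithLp.toLp_sub, WithLp.toLp_sum]

lemma BCDStep.isBCDSweep {A : Fin K → Matrix (Fin M) (Fin N) ℝ} {b : Fin M → ℝ}
    {h : Fin K → (Fin N → ℝ) → ℝ} {X : Fin K → Set (Fin N → ℝ)} {x y : Fin K → Fin N → ℝ}
    (hxy : BCDStep A b h X x y) :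
    IsBCDSweep (blockObjective (fun k => mulVecEuclideanLin (A k)) (WithLp.toLp 2 b) h) X x y := by
  rw [← fq_eq_blockObjective]
  exact fun k => ⟨(hxy k).1, isMinOn_iff.2 (hxy k).2⟩

lemma sqnorm_mulVec_le_sum_sq_mul (A : Matrix (Fin M) (Fin N) ℝ) (v : Fin N → ℝ) :
    sqnorm (A.mulVec v) ≤ (∑ i, ∑ j, A i j ^ 2) * sqnorm v := by
  rw [Finset.sum_mul]
  exact Finset.sum_le_sum fun i _ => Finset.sum_mul_sq_le_sq_mul_sq univ (A i) v

lemma sqnorm_mulVec_le_lamMaxQ_mul (A : Matrix (Fin M) (Fin N) ℝ) (v : Fin N → ℝ) :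
    sqnorm (A.mulVec v) ≤ lamMaxQ A * sqnorm v := by
  obtain hv | hv := (sqnorm_nonneg v).eq_or_lt
  · simpa [← hv] using sqnorm_mulVec_le_sum_sq_mul A v
  have hbdd : BddAbove {r : ℝ | ∃ w : Fin N → ℝ, sqnorm w = 1 ∧ r = sqnorm (A.mulVec w)} := by
    refine ⟨∑ i, ∑ j, A i j ^ 2, ?_⟩
    rintro _ ⟨w, hw, rfl⟩
    simpa [hw] using sqnorm_mulVec_le_sum_sq_mul A w
  have hscale (n : ℕ) (u : Fin n → ℝ) :
      sqnorm ((√(sqnorm v))⁻¹ • u) = (sqnorm v)⁻¹ * sqnorm u := by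
    rw [sqnorm_smul, inv_pow, Real.sq_sqrt hv.le]
  have hunit : sqnorm (A.mulVec ((√(sqnorm v))⁻¹ • v)) ≤ lamMaxQ A :=
    le_csSup hbdd ⟨_, (hscale N v).trans (inv_mul_cancel₀ hv.ne'), rfl⟩
  rwa [Matrix.mulVec_smul, hscale, inv_mul_le_iff₀ hv, mul_comm] at hunit

lemma maxOf_lamMaxQ_nonneg (hK : 1 ≤ K) (A : Fin K → Matrix (Fin M) (Fin N) ℝ) :
    0 ≤ maxOf hK fun k => lamMaxQ (A k) := by
  refine Finset.le_sup'_of_le _ (Finset.mem_univ ⟨0, hK⟩) (Real.sSup_nonneg ?_)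
  rintro _ ⟨w, -, rfl⟩
  exact sqnorm_nonneg _

lemma sum_norm_sq_mulVecEuclideanLin_le (hK : 1 ≤ K) (A : Fin K → Matrix (Fin M) (Fin N) ℝ)
    {v : Fin K → Fin N → ℝ} {R : ℝ} (hR : √(∑ k, sqnorm (v k)) ≤ R) :
    ∑ k, ‖mulVecEuclideanLin (A k) (v k)‖ ^ 2 ≤ R ^ 2 * maxOf hK fun k => lamMaxQ (A k) := by
  set L := maxOf hK fun k => lamMaxQ (A k)
  have hblock (k : Fin K) : ‖mulVecEuclideanLin (A k) (v k)‖ ^ 2 ≤ sqnorm (v k) * L := by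
    rw [mulVecEuclideanLin_apply, ← sqnorm_eq_norm_sq, mul_comm]
    exact (sqnorm_mulVec_le_lamMaxQ_mul _ _).trans <| mul_le_mul_of_nonneg_right
      (Finset.le_sup' (fun k => lamMaxQ (A k)) (Finset.mem_univ k)) (sqnorm_nonneg _)
  calc _ ≤ (∑ k, sqnorm (v k)) * L := by
        rw [Finset.sum_mul]
        exact Finset.sum_le_sum fun k _ => hblock k
    _ ≤ R ^ 2 * L := mul_le_mul_of_nonneg_right (Real.sqrt_le_iff.1 hR).2
        (maxOf_lamMaxQ_nonneg hK A)

end Euclidean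

/-- Theorem 2, case 3: iteration complexity of cyclic exact BCD
for general matrices `A_k`. -/
theorem bcd_rate_general {K M N : ℕ} (hK : 1 ≤ K) (hM : 1 ≤ M) (hN : 1 ≤ N)
    (A : Fin K → Matrix (Fin M) (Fin N) ℝ) (b : Fin M → ℝ)
    (X : Fin K → Set (Fin N → ℝ)) (h : Fin K → (Fin N → ℝ) → ℝ)
    (hXne : ∀ k, (X k).Nonempty) (hXcl : ∀ k, IsClosed (X k))
    (hXcv : ∀ k, Convex ℝ (X k))
    (hhcv : ∀ k, ConvexOn ℝ Set.univ (h k))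
    (hhlsc : ∀ k, LowerSemicontinuous (h k))
    (x : ℕ → Fin K → Fin N → ℝ) (hx0 : ∀ k, x 0 k ∈ X k)
    (hstep : ∀ r : ℕ, BCDStep A b h X (x r) (x (r + 1)))
    (xstar : Fin K → Fin N → ℝ) (hxstarX : ∀ k, xstar k ∈ X k)
    (hxstar : ∀ y : Fin K → Fin N → ℝ, (∀ k, y k ∈ X k) → fq A b h xstar ≤ fq A b h y)
    (R0 : ℝ)
    (hR0 : ∀ z : Fin K → Fin N → ℝ, (∀ k, z k ∈ X k) → fq A b h z ≤ fq A b h (x 0) →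
      ∀ y : Fin K → Fin N → ℝ, (∀ k, y k ∈ X k) →
        (∀ z' : Fin K → Fin N → ℝ, (∀ k, z' k ∈ X k) → fq A b h y ≤ fq A b h z') →
        Real.sqrt (∑ k, sqnorm (z k - y k)) ≤ R0)
    (r : ℕ) :
    fq A b h (x (r + 1)) - fq A b h xstar ≤
      3 * max (fq A b h (x 0) - fq A b h xstar)
          (2 * R0 ^ 2 * maxOf hK (fun k => lamMaxQ (A k)) * (1 + (K : ℝ) ^ 2)) /
        (r + 1) := by
  have hL := maxOf_lamMaxQ_nonneg hK A
  simp only [fq_eq_blockObjective] at hxstar hR0 ⊢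
  refine (bcd_rate_general_general _ _ h (fun k => (hhcv k).subset (Set.subset_univ _) (hXcv k))
    hx0 (fun n => (hstep n).isBCDSweep) hxstarX hxstar (fun z hz hz0 =>
      sum_norm_sq_mulVecEuclideanLin_le hK A (hR0 z hz hz0 xstar hxstarX hxstar)) (r + 1)).trans ?_
  rw [Nat.cast_succ, ← mul_assoc 2]
  gcongr ?_ * max _ (_ * ?_) / ?_ <;> linarith
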